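/- Fix q ∈ (0,1) and an integer N ≥ 1. The operator z_q^{*N} z_q^N on ℓ²(ℕ) is positive and invertible in B(ℓ²(ℕ)), with ‖(z_q^{*N} z_q^N)^{−1}‖ ≤ ∏_{k=1}^{N} (1 − q^k)^{−1}; its inverse belongs to the Toeplitz algebra T; and (z_q^{*N} z_q^N)^{−1/2} − 1 is a compact operator, where (z_q^{*N} z_q^N)^{−1/2} denotes the inverse of the positive square root of z_q^{*N} z_q^N. -/

import Mathlib

/-!
Let `D` be the diagonal operator `D eₙ = qⁿ eₙ`. On basis vectors one checks `z* z = 1 - q D` and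
`D z = q z D`, so that `z*ᴺ⁺¹ zᴺ⁺¹ = z*ᴺ (1 - q D) zᴺ = z*ᴺ zᴺ (1 - qᴺ⁺¹ D)`: by induction
`P` is the product of the factors `1 - qᵏ D`, `1 ≤ k ≤ N`.

The series `D = (1 - q) ∑ₙ qⁿ (1 - Sⁿ⁺¹ S*ⁿ⁺¹)` converges in norm, and its terms are multiples of
finite-rank projections lying in the Toeplitz algebra `T`. Hence `D` is a compact element of `T`
with `‖D‖ ≤ 1` (`exists_geometric_diagonal`). The Neumann series then inverts each `1 - qᵏ D`
inside `T`, with inverse of norm at most `(1 - qᵏ)⁻¹` (`exists_inverse_one_sub_smul`), which gives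
the norm bound and the membership for `P⁻¹`; moreover `P - 1` is compact.

Finally, if `R ≥ 0` and `R² = P⁻¹`, then `R + 1` is invertible and
`(R + 1) (R - 1) = R² - 1 = R² (1 - P)` is compact, so `R - 1` is compact.
-/

open scoped InnerProductSpace

section Toeplitz

variable {H : Type*} [NormedAddCommGroup H] [InnerProductSpace ℂ H]

/-! ### Operators determined by a Hilbert basis, and compact operators -/

theorem HilbertBasis.vec_ext_inner (e : HilbertBasis ℕ ℂ H) {x y : H}
    (h : ∀ m, ⟪e m, x⟫_ℂ = ⟪e m, y⟫_ℂ) : x = y := by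
  apply e.repr.injective
  ext m
  simpa only [HilbertBasis.repr_apply_apply] using h m

theorem HilbertBasis.clm_ext (e : HilbertBasis ℕ ℂ H) {A B : H →L[ℂ] H}
    (h : ∀ n, A (e n) = B (e n)) : A = B := by
  refine ContinuousLinearMap.ext_on (s := Set.range e) ?_ ?_
  · rw [Submodule.dense_iff_topologicalClosure_eq_top]
    exact e.dense_span
  · rintro _ ⟨n, rfl⟩
    exact h n

theorem HilbertBasis.inner_eq_ite (e : HilbertBasis ℕ ℂ H) (m n : ℕ) :
    ⟪e m, e n⟫_ℂ = if m = n then 1 else 0 :=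
  orthonormal_iff_ite.mp e.orthonormal m n

theorem IsCompactOperator.mul_left {A : H →L[ℂ] H} (hA : IsCompactOperator A)
    (B : H →L[ℂ] H) : IsCompactOperator ⇑(B * A) :=
  hA.clm_comp B

theorem IsCompactOperator.mul_right {A : H →L[ℂ] H} (hA : IsCompactOperator A)
    (B : H →L[ℂ] H) : IsCompactOperator ⇑(A * B) :=
  hA.comp_clm B

/-! ### Commutation of the diagonal operator with the weighted shift -/

theorem diagonal_mul_weighted_shift (e : HilbertBasis ℕ ℂ H) (q : ℝ) (z : H →L[ℂ] H)
    (hz : ∀ n : ℕ, z (e n) = ((Real.sqrt (1 - q ^ (n + 1)) : ℝ) : ℂ) • e (n + 1))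
    (D : H →L[ℂ] H) (hD : ∀ n, D (e n) = ((q : ℂ) ^ n) • e n) :
    D * z = (q : ℂ) • (z * D) := by
  refine e.clm_ext fun n => ?_
  simp only [mul_apply_eq_comp, smul_apply, hz, hD, map_smul,
    smul_smul]
  congr 1
  ring

theorem diagonal_mul_weighted_shift_pow (q : ℝ) (z D : H →L[ℂ] H)
    (h : D * z = (q : ℂ) • (z * D)) (N : ℕ) :
    D * z ^ N = ((q : ℂ) ^ N) • (z ^ N * D) := by
  induction N with
  | zero => simp
  | succ N ih =>
    rw [pow_succ, ← mul_assoc, ih, smul_mul_assoc, mul_assoc, h, mul_smul_comm, smul_smul,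
      mul_assoc, pow_succ]

theorem hasSum_clm_apply {f : ℕ → H →L[ℂ] H} {A : H →L[ℂ] H} (h : HasSum f A) (x : H) :
    HasSum (fun n => f n x) (A x) :=
  (ContinuousLinearMap.apply ℂ H x).hasSum h

variable [CompleteSpace H]

/-! ### The unilateral shift and its finite-rank projections -/

theorem star_shift_mul_shift (e : HilbertBasis ℕ ℂ H) (S : H →L[ℂ] H)
    (hS : ∀ n : ℕ, S (e n) = e (n + 1)) : star S * S = 1 := by
  refine e.clm_ext fun n => e.vec_ext_inner fun m => ?_
  rw [mul_apply_eq_comp, ContinuousLinearMap.star_eq_adjoint,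
    ContinuousLinearMap.adjoint_inner_right, hS, hS, one_apply_eq_self,
    e.inner_eq_ite, e.inner_eq_ite]
  simp

theorem star_shift_zero (e : HilbertBasis ℕ ℂ H) (S : H →L[ℂ] H)
    (hS : ∀ n : ℕ, S (e n) = e (n + 1)) : star S (e 0) = 0 := by
  refine e.vec_ext_inner fun m => ?_
  rw [ContinuousLinearMap.star_eq_adjoint, ContinuousLinearMap.adjoint_inner_right, hS,
    e.inner_eq_ite]
  simp

theorem star_shift_succ (e : HilbertBasis ℕ ℂ H) (S : H →L[ℂ] H)
    (hS : ∀ n : ℕ, S (e n) = e (n + 1)) (n : ℕ) : star S (e (n + 1)) = e n := by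
  rw [← hS, ← mul_apply_eq_comp, star_shift_mul_shift e S hS]
  rfl

theorem star_shift_pow_mul_shift_pow (e : HilbertBasis ℕ ℂ H) (S : H →L[ℂ] H)
    (hS : ∀ n : ℕ, S (e n) = e (n + 1)) (k : ℕ) : star S ^ k * S ^ k = 1 := by
  induction k with
  | zero => simp
  | succ k ih =>
    rw [pow_succ, pow_succ', mul_assoc, ← mul_assoc (star S) S, star_shift_mul_shift e S hS,
      one_mul, ih]

/-- `1 - Sᵏ S*ᵏ` is the orthogonal projection onto the span of `e₀, …, e_{k-1}`. -/
theorem one_sub_range_apply (e : HilbertBasis ℕ ℂ H) (S : H →L[ℂ] H)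
    (hS : ∀ n : ℕ, S (e n) = e (n + 1)) (k m : ℕ) :
    (1 - S ^ k * star S ^ k) (e m) = if m < k then e m else 0 := by
  induction k generalizing m with
  | zero => simp
  | succ k ih =>
    have key : 1 - S ^ (k + 1) * star S ^ (k + 1)
        = (1 - S * star S) + S * (1 - S ^ k * star S ^ k) * star S := by
      rw [pow_succ', pow_succ]
      noncomm_ring
    rw [key]
    cases m with
    | zero => simp [star_shift_zero e S hS]
    | succ m =>
      rw [add_apply, mul_apply_eq_comp,
        mul_apply_eq_comp, star_shift_succ e S hS, ih]
      simp only [sub_apply, mul_apply_eq_comp,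
        one_apply_eq_self, star_shift_succ e S hS, hS, sub_self, zero_add,
        Nat.add_lt_add_iff_right]
      split_ifs <;> simp [hS]

theorem norm_one_sub_range_le (e : HilbertBasis ℕ ℂ H) (S : H →L[ℂ] H)
    (hS : ∀ n : ℕ, S (e n) = e (n + 1)) (k : ℕ) : ‖1 - S ^ k * star S ^ k‖ ≤ 1 := by
  refine IsStarProjection.norm_le _ (IsStarProjection.one_sub ⟨?_, ?_⟩)
  · change S ^ k * star S ^ k * (S ^ k * star S ^ k) = S ^ k * star S ^ k
    rw [mul_assoc, ← mul_assoc (star S ^ k), star_shift_pow_mul_shift_pow e S hS, one_mul]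
  · rw [isSelfAdjoint_iff, star_mul, star_pow, star_pow, star_star]

theorem isCompactOperator_one_sub_range (e : HilbertBasis ℕ ℂ H) (S : H →L[ℂ] H)
    (hS : ∀ n : ℕ, S (e n) = e (n + 1)) (k : ℕ) :
    IsCompactOperator ⇑(1 - S ^ k * star S ^ k) := by
  -- `1 - S S*` is the rank-one projection onto `e₀`, which factors through `ℂ`.
  have h1 : IsCompactOperator ⇑(1 - S * star S) := by
    have h : 1 - S * star S
        = (ContinuousLinearMap.toSpanSingleton ℂ (e 0)) ∘L (innerSL ℂ (e 0)) := by
      refine e.clm_ext fun n => ?_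
      have := one_sub_range_apply e S hS 1 n
      rw [pow_one, pow_one] at this
      rw [this]
      have hn : ‖e 0‖ = 1 := e.orthonormal.1 0
      cases n <;> simp [e.inner_eq_ite, hn]
    rw [h]
    exact ((isCompactOperator_id (E := ℂ)).comp_clm (innerSL ℂ (e 0))).clm_comp
      (ContinuousLinearMap.toSpanSingleton ℂ (e 0))
  induction k with
  | zero =>
    simpa using (isCompactOperator_zero : IsCompactOperator (0 : H → H))
  | succ k ih =>
    have key : 1 - S ^ (k + 1) * star S ^ (k + 1)
        = (1 - S * star S) + S * (1 - S ^ k * star S ^ k) * star S := by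
      rw [pow_succ', pow_succ]
      noncomm_ring
    rw [key]
    exact h1.add ((ih.mul_left S).mul_right (star S))

/-! ### The diagonal operator and Neumann series -/

/-- The diagonal operator `eₙ ↦ qⁿ eₙ` exists, is a contraction, is compact, and lies in the
Toeplitz algebra; it is the sum of the series `(1 - q) ∑ₙ qⁿ (1 - Sⁿ⁺¹ S*ⁿ⁺¹)`. -/
theorem exists_geometric_diagonal (e : HilbertBasis ℕ ℂ H) (S : H →L[ℂ] H)
    (hS : ∀ n : ℕ, S (e n) = e (n + 1)) (q : ℝ) (hq : q ∈ Set.Ioo (0 : ℝ) 1) :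
    ∃ D : H →L[ℂ] H, (∀ n, D (e n) = ((q : ℂ) ^ n) • e n) ∧ ‖D‖ ≤ 1 ∧
      D ∈ StarAlgebra.elemental ℂ S ∧ IsCompactOperator ⇑D := by
  obtain ⟨hq0, hq1⟩ := hq
  have hqc : ‖(q : ℂ)‖ < 1 := by simpa [abs_of_pos hq0] using hq1
  have hq1c : (1 - (q : ℂ)) ≠ 0 := by
    rw [sub_ne_zero]
    exact_mod_cast hq1.ne'
  set f : ℕ → H →L[ℂ] H :=
    fun n => ((1 - (q : ℂ)) * (q : ℂ) ^ n) • (1 - S ^ (n + 1) * star S ^ (n + 1)) with hf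
  have hbound : ∀ n, ‖f n‖ ≤ (1 - q) * q ^ n := by
    intro n
    have h1 : ‖(1 - (q : ℂ)) * (q : ℂ) ^ n‖ = (1 - q) * q ^ n := by
      have : (1 - (q : ℂ)) * (q : ℂ) ^ n = (((1 - q) * q ^ n : ℝ) : ℂ) := by push_cast; ring
      rw [this, Complex.norm_real, Real.norm_of_nonneg]
      exact mul_nonneg (by linarith) (by positivity)
    calc ‖f n‖ ≤ ‖(1 - (q : ℂ)) * (q : ℂ) ^ n‖ * ‖1 - S ^ (n + 1) * star S ^ (n + 1)‖ :=
          norm_smul_le _ _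
      _ ≤ (1 - q) * q ^ n * 1 := by
          rw [h1]
          exact mul_le_mul_of_nonneg_left (norm_one_sub_range_le e S hS _)
            (mul_nonneg (by linarith) (by positivity))
      _ = _ := mul_one _
  have hsumR : HasSum (fun n => (1 - q) * q ^ n) 1 := by
    have := (hasSum_geometric_of_lt_one hq0.le hq1).mul_left (1 - q)
    rwa [mul_inv_cancel₀ (by linarith)] at this
  have hsum : Summable f := Summable.of_norm_bounded hsumR.summable hbound
  refine ⟨∑' n, f n, fun m => ?_, tsum_of_norm_bounded hsumR hbound, ?_, ?_⟩
  · have h1 : HasSum (fun n => f n (e m)) ((∑' n, f n) (e m)) :=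
      hasSum_clm_apply hsum.hasSum (e m)
    refine h1.unique ?_
    rw [← hasSum_nat_add_iff' m]
    -- Only the terms with `m ≤ n` contribute, and they form a geometric series.
    have h2 : ∑ i ∈ Finset.range m, f i (e m) = 0 := by
      refine Finset.sum_eq_zero fun i hi => ?_
      rw [hf]
      simp only [smul_apply]
      rw [one_sub_range_apply e S hS, if_neg, smul_zero]
      have := Finset.mem_range.mp hi
      omega
    have h3 : (fun n => f (n + m) (e m))
        = fun n => ((1 - (q : ℂ)) * (q : ℂ) ^ m * (q : ℂ) ^ n) • e m := by
      funext n
      rw [hf]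
      simp only [smul_apply]
      rw [one_sub_range_apply e S hS, if_pos (by omega)]
      congr 1
      ring
    rw [h2, sub_zero, h3]
    have h4 := ((hasSum_geometric_of_norm_lt_one hqc).mul_left
      ((1 - (q : ℂ)) * (q : ℂ) ^ m)).smul_const (e m)
    convert h4 using 2
    field_simp
  · refine tsum_mem (StarAlgebra.elemental.isClosed ℂ S) fun n => ?_
    have hSm := StarAlgebra.elemental.self_mem ℂ S
    exact SMulMemClass.smul_mem _ (sub_mem (one_mem _)
      (mul_mem (pow_mem hSm _) (pow_mem (star_mem hSm) _)))
  · have hcl : IsClosed (compactOperator (RingHom.id ℂ) H H : Set (H →L[ℂ] H)) :=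
      isClosed_setOfPred_isCompactOperator
    exact tsum_mem (s := compactOperator (RingHom.id ℂ) H H) hcl fun n =>
      Submodule.smul_mem (compactOperator (RingHom.id ℂ) H H) _
        (isCompactOperator_one_sub_range e S hS (n + 1))

/-- Neumann series: if `‖D‖ ≤ 1` and `0 ≤ t < 1`, then `1 - t D` has an inverse of norm at most
`(1 - t)⁻¹` in every closed star-subalgebra containing `D`. -/
theorem exists_inverse_one_sub_smul (T : StarSubalgebra ℂ (H →L[ℂ] H))
    (hT : IsClosed (T : Set (H →L[ℂ] H))) (D : H →L[ℂ] H) (hD : ‖D‖ ≤ 1) (hDT : D ∈ T)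
    (t : ℝ) (ht0 : 0 ≤ t) (ht1 : t < 1) :
    ∃ Q ∈ T, (1 - (t : ℂ) • D) * Q = 1 ∧ Q * (1 - (t : ℂ) • D) = 1 ∧ ‖Q‖ ≤ (1 - t)⁻¹ := by
  have hle : ‖(t : ℂ) • D‖ ≤ t := by
    calc ‖(t : ℂ) • D‖ ≤ ‖(t : ℂ)‖ * ‖D‖ := norm_smul_le _ _
      _ ≤ t * 1 := by
          rw [Complex.norm_real, Real.norm_of_nonneg ht0]
          exact mul_le_mul_of_nonneg_left hD ht0
      _ = t := mul_one t
  have hlt := hle.trans_lt ht1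
  refine ⟨∑' n : ℕ, ((t : ℂ) • D) ^ n, ?_, mul_neg_geom_series _ hlt,
    geom_series_mul_neg _ hlt, ?_⟩
  · exact tsum_mem hT fun n => pow_mem (SMulMemClass.smul_mem _ hDT) n
  · have h1 := tsum_geometric_le_of_norm_lt_one _ hlt
    have h2 : ‖(1 : H →L[ℂ] H)‖ ≤ 1 := ContinuousLinearMap.norm_id_le
    have h3 : (1 - ‖(t : ℂ) • D‖)⁻¹ ≤ (1 - t)⁻¹ :=
      inv_anti₀ (by linarith) (by linarith)
    linarith

/-! ### The product formula and the inverse -/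

theorem weighted_shift_star_mul_self (e : HilbertBasis ℕ ℂ H) (q : ℝ)
    (hq : q ∈ Set.Ioo (0 : ℝ) 1) (z : H →L[ℂ] H)
    (hz : ∀ n : ℕ, z (e n) = ((Real.sqrt (1 - q ^ (n + 1)) : ℝ) : ℂ) • e (n + 1))
    (D : H →L[ℂ] H) (hD : ∀ n, D (e n) = ((q : ℂ) ^ n) • e n) :
    star z * z = 1 - (q : ℂ) • D := by
  refine e.clm_ext fun n => e.vec_ext_inner fun m => ?_
  rw [mul_apply_eq_comp, ContinuousLinearMap.star_eq_adjoint,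
    ContinuousLinearMap.adjoint_inner_right, hz, hz]
  simp only [sub_apply, one_apply_eq_self,
    smul_apply, hD, inner_sub_right, inner_smul_left, inner_smul_right,
    e.inner_eq_ite, Complex.conj_ofReal]
  by_cases h : m = n
  · subst h
    have h0 : 0 ≤ 1 - q ^ (m + 1) := sub_nonneg.mpr (pow_le_one₀ hq.1.le hq.2.le)
    have h1 : ((Real.sqrt (1 - q ^ (m + 1)) : ℝ) : ℂ) * ((Real.sqrt (1 - q ^ (m + 1)) : ℝ) : ℂ)
        = 1 - (q : ℂ) ^ (m + 1) := by
      rw [← Complex.ofReal_mul, Real.mul_self_sqrt h0]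
      push_cast
      ring
    simp only [if_true, mul_one]
    rw [h1]
    ring
  · simp [h]

/-- One factor of the product formula `z*ᴺ zᴺ = ∏ₖ (1 - qᵏ D)`. -/
theorem star_pow_mul_pow_succ (q : ℝ) (z D : H →L[ℂ] H)
    (h1 : star z * z = 1 - (q : ℂ) • D) (h2 : D * z = (q : ℂ) • (z * D)) (N : ℕ) :
    star z ^ (N + 1) * z ^ (N + 1)
      = star z ^ N * z ^ N * (1 - ((q ^ (N + 1) : ℝ) : ℂ) • D) := by
  have h3 : (1 - (q : ℂ) • D) * z ^ N = z ^ N * (1 - ((q ^ (N + 1) : ℝ) : ℂ) • D) := by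
    rw [sub_mul, mul_sub, one_mul, mul_one, smul_mul_assoc,
      diagonal_mul_weighted_shift_pow q z D h2, smul_smul, mul_smul_comm]
    congr 2
    push_cast
    ring
  rw [pow_succ, pow_succ', mul_assoc, ← mul_assoc (star z) z, h1, h3, mul_assoc]

/-- The inverse of `z*ᴺ zᴺ`, its norm bound and its membership in `T`, and the compactness of
`z*ᴺ zᴺ - 1`, by induction along the product formula. -/
theorem exists_inverse_star_pow_mul_pow (T : StarSubalgebra ℂ (H →L[ℂ] H))
    (hT : IsClosed (T : Set (H →L[ℂ] H))) (q : ℝ) (hq : q ∈ Set.Ioo (0 : ℝ) 1)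
    (z D : H →L[ℂ] H) (hD : ‖D‖ ≤ 1) (hDT : D ∈ T) (hDc : IsCompactOperator ⇑D)
    (h1 : star z * z = 1 - (q : ℂ) • D) (h2 : D * z = (q : ℂ) • (z * D)) (N : ℕ) :
    (∃ Q ∈ T, star z ^ N * z ^ N * Q = 1 ∧ Q * (star z ^ N * z ^ N) = 1 ∧
      ‖Q‖ ≤ ∏ k ∈ Finset.range N, (1 - q ^ (k + 1))⁻¹) ∧
    IsCompactOperator ⇑(star z ^ N * z ^ N - 1) := by
  induction N with
  | zero =>
    refine ⟨⟨1, one_mem _, by simp, by simp, ?_⟩, ?_⟩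
    · rw [Finset.range_zero, Finset.prod_empty]
      exact ContinuousLinearMap.norm_id_le
    · simpa using (isCompactOperator_zero : IsCompactOperator (0 : H → H))
  | succ N ih =>
    obtain ⟨⟨Q, hQT, hPQ, hQP, hQn⟩, hc⟩ := ih
    have ht1 : q ^ (N + 1) < 1 := pow_lt_one₀ hq.1.le hq.2 (by omega)
    obtain ⟨Q', hQ'T, hl, hr, hQ'n⟩ := exists_inverse_one_sub_smul T hT D hD hDT
      (q ^ (N + 1)) (pow_nonneg hq.1.le _) ht1
    rw [star_pow_mul_pow_succ q z D h1 h2]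
    set A := star z ^ N * z ^ N
    set B := 1 - ((q ^ (N + 1) : ℝ) : ℂ) • D with hB
    refine ⟨⟨Q' * Q, mul_mem hQ'T hQT, ?_, ?_, ?_⟩, ?_⟩
    · rw [mul_assoc, ← mul_assoc B, hl, one_mul, hPQ]
    · rw [mul_assoc, ← mul_assoc Q, hQP, one_mul, hr]
    · rw [Finset.prod_range_succ, mul_comm (Finset.prod _ _)]
      exact (norm_mul_le _ _).trans (mul_le_mul hQ'n hQn (norm_nonneg _)
        (inv_nonneg.mpr (by linarith)))
    · have h3 : A * B - 1 = (A - 1) * B - ((q ^ (N + 1) : ℝ) : ℂ) • D := by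
        rw [sub_mul, one_mul, hB]
        abel
      rw [h3]
      exact (hc.mul_right B).sub (hDc.smul _)

end Toeplitz

/-- For `q ∈ (0,1)` and `N ≥ 1`, the operator `P = z_q^{*N} z_q^N` is
positive and invertible in `B(ℓ²(ℕ))`, its inverse satisfies
`‖P⁻¹‖ ≤ ∏_{k=1}^N (1-q^k)⁻¹` and belongs to the Toeplitz algebra `T`; moreover
`P^{-1/2} - 1` is compact, where `P^{-1/2}` is the inverse of the positive square root of `P`
(characterized as the positive operator `R` with `R² = P⁻¹`). -/
theorem statement12
    {H : Type*} [NormedAddCommGroup H] [InnerProductSpace ℂ H] [CompleteSpace H]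
    (e : HilbertBasis ℕ ℂ H) (S : H →L[ℂ] H)
    (hS : ∀ n : ℕ, S (e n) = e (n + 1))
    (q : ℝ) (hq : q ∈ Set.Ioo (0 : ℝ) 1)
    (z : H →L[ℂ] H)
    (hz : ∀ n : ℕ, z (e n) = ((Real.sqrt (1 - q ^ (n + 1)) : ℝ) : ℂ) • e (n + 1))
    (N : ℕ) (hN : 1 ≤ N)
    (P : H →L[ℂ] H) (hP : P = (star z) ^ N * z ^ N) :
    P.IsPositive ∧
    (∃ Pinv : H →L[ℂ] H, P * Pinv = 1 ∧ Pinv * P = 1) ∧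
    (∀ Pinv : H →L[ℂ] H, P * Pinv = 1 → Pinv * P = 1 →
      ‖Pinv‖ ≤ ∏ k ∈ Finset.range N, (1 - q ^ (k + 1))⁻¹ ∧
        Pinv ∈ StarAlgebra.elemental ℂ S) ∧
    (∃ R : H →L[ℂ] H, R.IsPositive ∧ R * R * P = 1 ∧ P * (R * R) = 1) ∧
    (∀ R : H →L[ℂ] H, R.IsPositive → R * R * P = 1 → P * (R * R) = 1 →
      IsCompactOperator ⇑(R - 1)) := by
  subst hP
  have hpos : (star z ^ N * z ^ N).IsPositive := by
    have h := ContinuousLinearMap.IsPositive.adjoint_conj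
      (ContinuousLinearMap.isPositive_one (𝕜 := ℂ) (E := H)) (z ^ N)
    rw [← star_pow]
    exact h
  obtain ⟨D, hDe, hDn, hDT, hDc⟩ := exists_geometric_diagonal e S hS q hq
  obtain ⟨⟨Q, hQT, hPQ, hQP, hQn⟩, hc⟩ := exists_inverse_star_pow_mul_pow
    (StarAlgebra.elemental ℂ S) (StarAlgebra.elemental.isClosed ℂ S) q hq z D hDn hDT hDc
    (weighted_shift_star_mul_self e q hq z hz D hDe) (diagonal_mul_weighted_shift e q z hz D hDe) N
  set P := star z ^ N * z ^ N
  refine ⟨hpos, ⟨Q, hPQ, hQP⟩, ?_, ?_, ?_⟩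
  · intro Pinv h _
    have : Pinv = Q := (left_inv_eq_right_inv hQP h).symm
    subst this
    exact ⟨hQn, hQT⟩
  · -- `Q* = Q* P Q` is positive, hence so is `Q`.
    have hQstar : (star Q).IsPositive := by
      have h : (star Q * (P * Q)).IsPositive := hpos.adjoint_conj Q
      rwa [hPQ, mul_one] at h
    have hQpos : Q.IsPositive := by
      have h : star Q = Q := by
        simpa only [star_star] using hQstar.isSelfAdjoint.star_eq.symm
      rwa [h] at hQstar
    have hQ0 : 0 ≤ Q := (ContinuousLinearMap.nonneg_iff_isPositive Q).mpr hQpos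
    have hsq := CFC.sqrt_mul_sqrt_self Q hQ0
    exact ⟨CFC.sqrt Q, (ContinuousLinearMap.nonneg_iff_isPositive _).mp (CFC.sqrt_nonneg Q),
      by rw [hsq, hQP], by rw [hsq, hPQ]⟩
  · intro R hR hRP _
    have hR0 : 0 ≤ R := (ContinuousLinearMap.nonneg_iff_isPositive R).mpr hR
    obtain ⟨U, hU⟩ : IsUnit (R + 1) :=
      (IsStrictlyPositive.nonneg_add hR0 isStrictlyPositive_one).isUnit
    have h1 : (R + 1) * (R - 1) = -(R * R * (P - 1)) := by
      rw [mul_sub (R * R), hRP]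
      noncomm_ring
    have h2 : R - 1 = (↑U⁻¹ : H →L[ℂ] H) * -(R * R * (P - 1)) := by
      rw [← h1, ← hU, Units.inv_mul_cancel_left]
    rw [h2]
    exact (hc.mul_left (R * R)).neg.mul_left _
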